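/- Let B ⊂ ℝ⁴ be open, f = (f¹,f²,f³): B → ℝ³ and A = (A⁴,…,A⁷): B → ℝ⁴ smooth, with w_a(y), F_∇^S, F_∇^B, F_∇ = F_∇^B + F_∇^S and β = −√−1·F_∇^B as in the context. Then the following are equivalent: (1) φ(w_a(y),w_b(y),w_c(y)) = 0 for all 4 ≤ a < b < c ≤ 7 and every y ∈ B (the graph S is coassociative with an appropriate orientation) and, for every y ∈ B, the 2-form β(y) on ℝ⁴ is anti-self-dual with respect to the induced metric g(y) (g_{ab}(y) = ⟨w_a(y),w_b(y)⟩) and the orientation of ℝ⁴ that is sign(*₇φ(w₄(y),…,w₇(y))) times the standard one (this sign is well defined since *₇φ(w₄,…,w₇) ≠ 0 when S is coassociative); (2) F_∇³/6 + F_∇ ∧ *₇φ = 0 at every point; (3) F_∇³/6 + F_∇ ∧ *₇φ = 0 and φ ∧ *₇(F_∇²) = 0 at every point. -/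

import Mathlib

open scoped BigOperators

noncomputable section

namespace FMpaper

variable {K : Type*} [NormedField K] [NormedAlgebra ℝ K]

/-- Coefficient model for the exterior algebra of `(ℝⁿ)*` with scalars in `K`:
a form is given by its coefficients on the basis `e^S`, `S ⊆ {0, …, n-1}` sorted. -/
abbrev Form (K : Type*) (n : ℕ) := Finset (Fin n) → K

variable {n : ℕ}

/-- Sign such that `e^s ∧ e^t = signMerge s t • e^(s ∪ t)` for disjoint sorted `s, t`. -/
def signMerge (s t : Finset (Fin n)) : K :=
  (-1 : K) ^ (((s ×ˢ t).filter (fun p => p.2 < p.1)).card)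

/-- Wedge product. -/
def wedge (α β : Form K n) : Form K n :=
  fun u => ∑ s ∈ u.powerset, signMerge s (u \ s) * α s * β (u \ s)

/-- Hodge star operator (for the standard inner product and orientation `e^{0⋯(n-1)}`). -/
def hstar (α : Form K n) : Form K n :=
  fun t => signMerge tᶜ t * α tᶜ

/-- Interior product with the basis vector `e_μ`. -/
def iprodB (μ : Fin n) (α : Form K n) : Form K n :=
  fun t => if μ ∈ t then 0
    else (-1 : K) ^ ((t.filter (fun j => j < μ)).card) * α (insert μ t)

/-- Interior product with the vector `v`. -/
def iprod (v : Fin n → K) (α : Form K n) : Form K n :=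
  fun t => ∑ μ, v μ * iprodB μ α t

/-- The basis covector `e^i` as a 1-form. -/
def e1 (i : Fin n) : Form K n := fun s => if s = {i} then 1 else 0

/-- The covector `v♭` dual to a vector `v`. -/
def flat (v : Fin n → K) : Form K n := ∑ i, v i • e1 i

/-- The vector `α♯` dual to a 1-form `α`. -/
def sharp1 (α : Form K n) : Fin n → K := fun i => α {i}

/-- The inner product of forms (extended `K`-bilinearly). -/
def inner' (α β : Form K n) : K := ∑ s, α s * β s

/-- The (Euclidean) norm of a form; for an `√-1 ℝ`-valued form `√-1 γ` this is `‖γ‖`. -/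
def fnorm (α : Form K n) : ℝ := Real.sqrt (∑ s, ‖α s‖ ^ 2)

/-- `α` is homogeneous of degree `k`. -/
def isGrade (k : ℕ) (α : Form K n) : Prop := ∀ s, s.card ≠ k → α s = 0

/-- Evaluation of a `k`-form on `k` vectors. -/
def evalForm {k : ℕ} (α : Form K n) (v : Fin k → (Fin n → K)) : K :=
  ∑ s : Finset (Fin n), α s *
    (if h : s.card = k then
      Matrix.det (Matrix.of fun i j => v i ((s.orderIsoOfFin h j : Fin n))) else 0)

/-- The matrix of the skew-symmetric endomorphism `γ♯` associated with a 2-form `γ`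
via `⟨γ♯ u, v⟩ = γ(u, v)`. -/
def mat2 (γ : Form K n) : Matrix (Fin n) (Fin n) K :=
  Matrix.of fun i j => if i < j then γ {i, j} else if j < i then - γ {i, j} else 0

/-- The standard `G₂` 3-form `φ = e^{123}+e^{145}+e^{167}+e^{246}−e^{257}−e^{347}−e^{356}`
on `ℝ⁷` (indices `1, …, 7` shifted to `0, …, 6`). -/
def phi7 : Form K 7 := fun s =>
  if s = ({0, 1, 2} : Finset (Fin 7)) then 1
  else if s = ({0, 3, 4} : Finset (Fin 7)) then 1
  else if s = ({0, 5, 6} : Finset (Fin 7)) then 1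
  else if s = ({1, 3, 5} : Finset (Fin 7)) then 1
  else if s = ({1, 4, 6} : Finset (Fin 7)) then -1
  else if s = ({2, 3, 6} : Finset (Fin 7)) then -1
  else if s = ({2, 4, 5} : Finset (Fin 7)) then -1
  else 0

/-- `*₇φ = e^{4567}+e^{2367}+e^{2345}+e^{1357}−e^{1346}−e^{1256}−e^{1247}` on `ℝ⁷`. -/
def psi7 : Form K 7 := fun s =>
  if s = ({3, 4, 5, 6} : Finset (Fin 7)) then 1
  else if s = ({1, 2, 5, 6} : Finset (Fin 7)) then 1
  else if s = ({1, 2, 3, 4} : Finset (Fin 7)) then 1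
  else if s = ({0, 2, 4, 6} : Finset (Fin 7)) then 1
  else if s = ({0, 2, 3, 5} : Finset (Fin 7)) then -1
  else if s = ({0, 1, 4, 5} : Finset (Fin 7)) then -1
  else if s = ({0, 1, 3, 6} : Finset (Fin 7)) then -1
  else 0

/-- The `G₂` 3-form `φ` on `V = span{e₁, …, e₇} ⊂ ℝ⁸`, regarded as a form on `ℝ⁸`
annihilated by `i(e₀)` (indices `1, …, 7` of `ℝ⁸`). -/
def phi8 : Form K 8 := fun s =>
  if s = ({1, 2, 3} : Finset (Fin 8)) then 1
  else if s = ({1, 4, 5} : Finset (Fin 8)) then 1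
  else if s = ({1, 6, 7} : Finset (Fin 8)) then 1
  else if s = ({2, 4, 6} : Finset (Fin 8)) then 1
  else if s = ({2, 5, 7} : Finset (Fin 8)) then -1
  else if s = ({3, 4, 7} : Finset (Fin 8)) then -1
  else if s = ({3, 5, 6} : Finset (Fin 8)) then -1
  else 0

/-- `*₇φ` on `V ⊂ ℝ⁸`, regarded as a 4-form on `ℝ⁸` annihilated by `i(e₀)`. -/
def psi8 : Form K 8 := fun s =>
  if s = ({4, 5, 6, 7} : Finset (Fin 8)) then 1
  else if s = ({2, 3, 6, 7} : Finset (Fin 8)) then 1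
  else if s = ({2, 3, 4, 5} : Finset (Fin 8)) then 1
  else if s = ({1, 3, 5, 7} : Finset (Fin 8)) then 1
  else if s = ({1, 3, 4, 6} : Finset (Fin 8)) then -1
  else if s = ({1, 2, 5, 6} : Finset (Fin 8)) then -1
  else if s = ({1, 2, 4, 7} : Finset (Fin 8)) then -1
  else 0

/-- The standard Cayley 4-form `Φ = e⁰ ∧ φ + *₇φ` on `ℝ⁸`. -/
def Phi8 : Form K 8 := wedge (e1 0) phi8 + psi8

/-- The index set of `V = span{e₁, …, e₇} ⊂ ℝ⁸`. -/
def Vset : Finset (Fin 8) := {1, 2, 3, 4, 5, 6, 7}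

/-- The Hodge star `*₇` of `V ⊂ ℝ⁸` (volume form `e^{1⋯7}`), acting on forms on `ℝ⁸`
annihilated by `i(e₀)`. -/
def star7 (α : Form K 8) : Form K 8 :=
  fun t => if (0 : Fin 8) ∈ t then 0 else signMerge (Vset \ t) t * α (Vset \ t)

/-- `α` is (the pullback of) a form on `V`, i.e. `i(e₀) α = 0`. -/
def onV (α : Form K 8) : Prop := ∀ s, (0 : Fin 8) ∈ s → α s = 0

/-- `λ²(α) = ½ (e⁰ ∧ α + i(α♯) φ)` for `α ∈ V*`. -/
def lambda2 (α : Form K 8) : Form K 8 :=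
  (2 : K)⁻¹ • (wedge (e1 0) α + iprod (sharp1 α) phi8)

/-- `λ⁴(α) = (1/√8) (e⁰ ∧ i(α♯) *₇φ − α ∧ φ)` for `α ∈ V*`. -/
def lambda4 (α : Form K 8) : Form K 8 :=
  (algebraMap ℝ K (Real.sqrt 8))⁻¹ • (wedge (e1 0) (iprod (sharp1 α) psi8) - wedge α phi8)

/-- `λ⁶(α) = *₈ λ²(α)` for `α ∈ V*`. -/
def lambda6 (α : Form K 8) : Form K 8 := hstar (lambda2 α)

/-- The projection `π²₇(α) = (α + *₈(Φ ∧ α))/4` onto `Λ²₇`. -/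
def pi27 (α : Form K 8) : Form K 8 := (4 : K)⁻¹ • (α + hstar (wedge Phi8 α))

/-- The projection `π⁴₇(β) = Σ_{μ=1}^{7} ⟨β, λ⁴(e^μ)⟩ λ⁴(e^μ)` onto `Λ⁴₇`. -/
def pi47 (β : Form K 8) : Form K 8 :=
  ∑ μ : Fin 7, inner' β (lambda4 (e1 μ.succ)) • lambda4 (e1 μ.succ)

/-- `τ(u₀,u₁,u₂,u₃) = Σ_{μ=1}^{7} λ⁴(e^μ)(u₀,u₁,u₂,u₃) ⬝ λ⁴(e^μ) = π⁴₇(u₀♭∧u₁♭∧u₂♭∧u₃♭)`. -/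
def tau4 (u : Fin 4 → (Fin 8 → K)) : Form K 8 :=
  ∑ μ : Fin 7, evalForm (lambda4 (e1 μ.succ)) u • lambda4 (e1 μ.succ)

/-- Partial derivative `∂f^a/∂x^j` at `x`. -/
def pd {m p : ℕ} (f : (Fin m → ℝ) → (Fin p → ℝ)) (x : Fin m → ℝ) (j : Fin m) (a : Fin p) : ℝ :=
  fderiv ℝ f x (Pi.single j 1) a


/-! Graph setting for associative `T³`-fibrations: `ℝ⁷ = ℝ⁴ × ℝ³` with coordinates
`(y⁴,…,y⁷,x¹,x²,x³)`, where `dx¹,dx²,dx³,dy⁴,…,dy⁷` is the dual basis `e¹,…,e⁷`. -/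

/-- The index of the coordinate `x^j` (`j = 1,2,3` shifted to `0,1,2`) in `ℝ⁷`. -/
def xj (j : Fin 3) : Fin 7 := Fin.castAdd 4 j

/-- The index of the coordinate `y^a` (`a = 4,…,7` shifted to `0,…,3`) in `ℝ⁷`. -/
def ya (a : Fin 4) : Fin 7 := a.addNat 3

/-- The spanning tangent vectors `w_a = ∂_a + Σ_j (∂f^j/∂y^a) ∂_j` of the graph of `f`. -/
def wC (f : (Fin 4 → ℝ) → (Fin 3 → ℝ)) (y : Fin 4 → ℝ) (a : Fin 4) : Fin 7 → ℝ :=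
  Pi.single (ya a) 1 + ∑ j : Fin 3, pd f y a j • (Pi.single (xj j) 1 : Fin 7 → ℝ)

/-- The real 2-form `γ` with `F_∇^S = √-1 γ`, i.e. `γ = Σ_{j,a} (∂f^j/∂y^a) dy^a ∧ dx^j`. -/
def gammaC (f : (Fin 4 → ℝ) → (Fin 3 → ℝ)) (y : Fin 4 → ℝ) : Form ℝ 7 :=
  ∑ j : Fin 3, ∑ a : Fin 4, pd f y a j • wedge (e1 (ya a)) (e1 (xj j))

/-- The `√-1 ℝ`-valued curvature 2-form
`F_∇^S = √-1 Σ_{j,a} (∂f^j/∂y^a) dy^a ∧ dx^j` of the real Fourier–Mukai transform. -/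
def FSC (f : (Fin 4 → ℝ) → (Fin 3 → ℝ)) (y : Fin 4 → ℝ) : Form ℂ 7 :=
  fun s => Complex.I * (gammaC f y s : ℂ)

/-! Anti-self-duality on `ℝ⁴` with respect to an arbitrary metric `G` and
orientation `ε` times the standard one. -/

/-- The indicator 2-form `e^u` on `ℝ⁴`. -/
def indF (u : Finset (Fin 4)) : Form ℝ 4 := fun s => if s = u then 1 else 0

/-- The 2×2 minor `det (H_{s t})` of a matrix `H` with rows `s` and columns `t` (sorted). -/
def minor2 (H : Matrix (Fin 4) (Fin 4) ℝ) (s t : Finset (Fin 4)) : ℝ :=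
  if hs : s.card = 2 then
    if ht : t.card = 2 then
      Matrix.det (Matrix.of fun i j =>
        H (s.orderIsoOfFin hs i : Fin 4) (t.orderIsoOfFin ht j : Fin 4))
    else 0
  else 0

/-- The inner product on 2-forms on `ℝ⁴` induced by the metric whose *inverse* Gram
matrix is `H`:  `⟨e^s, e^t⟩ = det (H_{s t})`. -/
def innerG2 (H : Matrix (Fin 4) (Fin 4) ℝ) (α β : Form ℝ 4) : ℝ :=
  ∑ s, ∑ t, α s * β t * minor2 H s t

/-- The Hodge star on 2-forms on `ℝ⁴` for the metric with Gram matrix `G` (in the standard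
basis) and the orientation which is `ε` times the standard one:  it is determined by
`γ ∧ (starG G ε β) = ⟨γ, β⟩_G · ε · √(det G) · e^{0123}`. -/
def starG (G : Matrix (Fin 4) (Fin 4) ℝ) (ε : ℝ) (β : Form ℝ 4) : Form ℝ 4 :=
  fun t => (signMerge tᶜ t : ℝ) * ε * Real.sqrt G.det * innerG2 G⁻¹ (indF tᶜ) β

/-- The real 2-form `γ^B` with `F_∇^B = √-1 γ^B`, regarded as a 2-form on `ℝ⁷`:
`γ^B = Σ_{a,b} (∂A^b/∂y^a) dy^a ∧ dy^b`. -/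
def gammaBC (A : (Fin 4 → ℝ) → (Fin 4 → ℝ)) (y : Fin 4 → ℝ) : Form ℝ 7 :=
  ∑ a : Fin 4, ∑ b : Fin 4, pd A y a b • wedge (e1 (ya a)) (e1 (ya b))

/-- The `√-1 ℝ`-valued curvature `F_∇^B = √-1 Σ_{a,b} (∂A^b/∂y^a) dy^a ∧ dy^b`. -/
def FBC (A : (Fin 4 → ℝ) → (Fin 4 → ℝ)) (y : Fin 4 → ℝ) : Form ℂ 7 :=
  fun s => Complex.I * (gammaBC A y s : ℂ)

/-- The real 2-form `β = -√-1 F_∇^B` regarded as a 2-form on `ℝ⁴ ⊇ B`. -/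
def betaC (A : (Fin 4 → ℝ) → (Fin 4 → ℝ)) (y : Fin 4 → ℝ) : Form ℝ 4 :=
  ∑ a : Fin 4, ∑ b : Fin 4, pd A y a b • wedge (e1 a) (e1 b)

/-- The Gram matrix `g_{ab} = ⟨w_a, w_b⟩` of the metric induced on the graph of `f`. -/
def gramC (f : (Fin 4 → ℝ) → (Fin 3 → ℝ)) (y : Fin 4 → ℝ) : Matrix (Fin 4) (Fin 4) ℝ :=
  Matrix.of fun a b => ∑ k, wC f y a k * wC f y b k

/-- The sign `sign (*₇φ(w₄,…,w₇))` fixing the orientation making the graph coassociative. -/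
def epsC (f : (Fin 4 → ℝ) → (Fin 3 → ℝ)) (y : Fin 4 → ℝ) : ℝ :=
  Real.sign (evalForm psi7 (fun a => wC f y a))

section Gen
variable {K : Type*} [NormedField K] 

abbrev sgZ (s t : Finset (Fin n)) : Prop :=
  ((s ×ˢ t).filter (fun p => p.2 < p.1)).card % 2 = 0

lemma sm_eq (s t : Finset (Fin n)) : (signMerge s t : K) = if sgZ s t then 1 else -1 := by
  unfold signMerge
  rcases Nat.even_or_odd (((s ×ˢ t).filter (fun p => p.2 < p.1)).card) with h | h
  · rw [h.neg_one_pow]; simp [Nat.even_iff.mp h]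
  · rw [h.neg_one_pow]; simp [Nat.odd_iff.mp h]

lemma wedge_gr {k : ℕ} {α : Form K n} (h : isGrade k α) (β : Form K n) (u : Finset (Fin n)) :
    wedge α β u = ∑ s ∈ u.powersetCard k, signMerge s (u \ s) * α s * β (u \ s) := by
  unfold wedge
  symm
  apply Finset.sum_subset
  · intro s hs
    exact Finset.mem_powerset.mpr (Finset.mem_powersetCard.mp hs).1
  · intro s hs hs'
    rw [h s, mul_zero, zero_mul]
    intro hc
    exact hs' (Finset.mem_powersetCard.mpr ⟨Finset.mem_powerset.mp hs, hc⟩)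

lemma wedge_isGrade {k l : ℕ} {α β : Form K n} (h : isGrade k α) (h' : isGrade l β) :
    isGrade (k + l) (wedge α β) := by
  intro u hu
  rw [wedge_gr h]
  apply Finset.sum_eq_zero
  intro s hs
  obtain ⟨h1, h2⟩ := Finset.mem_powersetCard.mp hs
  rw [h' (u \ s), mul_zero]
  rw [Finset.card_sdiff_of_subset h1]
  have := Finset.card_le_card h1
  omega

end Gen


section Alg

def om : Fin 3 → Fin 4 → Fin 4 → ℝ :=
  ![!![0, 1, 0, 0; -1, 0, 0, 0; 0, 0, 0, 1; 0, 0, -1, 0],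
    !![0, 0, 1, 0; 0, 0, 0, -1; -1, 0, 0, 0; 0, 1, 0, 0],
    !![0, 0, 0, -1; 0, 0, -1, 0; 0, 1, 0, 0; 1, 0, 0, 0]]

def mn (P : Fin 4 → Fin 3 → ℝ) : Fin 3 → Fin 4 → Fin 4 → ℝ :=
  ![fun a b => P a 1 * P b 2 - P a 2 * P b 1,
    fun a b => P a 2 * P b 0 - P a 0 * P b 2,
    fun a b => P a 0 * P b 1 - P a 1 * P b 0]

/-- `φ(e_k, w_a, w_b)` -/
def sg (P : Fin 4 → Fin 3 → ℝ) (k : Fin 3) (a b : Fin 4) : ℝ := om k a b + mn P k a b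

/-- `φ(e_c, w_a, w_b)` with `e_c` a `y` direction -/
def YY (P : Fin 4 → Fin 3 → ℝ) (c a b : Fin 4) : ℝ :=
  ∑ k, (P a k * om k b c + P b k * om k c a)

/-- `φ(w_a, w_b, w_c)` -/
def CC (P : Fin 4 → Fin 3 → ℝ) (a b c : Fin 4) : ℝ := ∑ k, P c k * sg P k a b + YY P c a b

def GG (P : Fin 4 → Fin 3 → ℝ) (a b : Fin 4) : ℝ := (if a = b then 1 else 0) + ∑ k, P a k * P b k

def hh (P : Fin 4 → Fin 3 → ℝ) (k l : Fin 3) : ℝ := (if k = l then 1 else 0) + ∑ a, P a k * P a l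

def DD (P : Fin 4 → Fin 3 → ℝ) : ℝ :=
  1 + mn P 0 0 1 + mn P 0 2 3 + mn P 1 0 2 - mn P 1 1 3 - mn P 2 0 3 - mn P 2 1 2

def r1 : Fin 6 → Fin 4 := ![0, 0, 0, 1, 1, 2]
def r2 : Fin 6 → Fin 4 := ![1, 2, 3, 2, 3, 3]
def cp : Fin 6 → Fin 6 := ![5, 4, 3, 2, 1, 0]
def ss : Fin 6 → ℝ := ![1, -1, 1, 1, -1, 1]

lemma om_anti (k : Fin 3) (a b : Fin 4) : om k a b = - om k b a := by
  fin_cases k <;> fin_cases a <;> fin_cases b <;> simp [om]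

lemma mn_anti (P : Fin 4 → Fin 3 → ℝ) (k : Fin 3) (a b : Fin 4) : mn P k a b = - mn P k b a := by
  fin_cases k <;> simp [mn] <;> ring

lemma CC_cyc (P : Fin 4 → Fin 3 → ℝ) (a b c : Fin 4) : CC P a b c = CC P b c a := by
  simp [CC, YY, sg, mn, Fin.sum_univ_three]; ring

lemma CC_anti (P : Fin 4 → Fin 3 → ℝ) (a b c : Fin 4) : CC P a b c = - CC P b a c := by
  simp only [CC, YY, sg, Fin.sum_univ_three]
  have h1 := fun k => om_anti k a b
  have h2 := fun k => om_anti k b c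
  have h3 := fun k => om_anti k c a
  have h4 := fun k => mn_anti P k a b
  rw [h1 0, h1 1, h1 2, h2 0, h2 1, h2 2, h3 0, h3 1, h3 2, h4 0, h4 1, h4 2]
  ring

lemma CC_zero {P : Fin 4 → Fin 3 → ℝ} (h : ∀ a b c : Fin 4, a < b → b < c → CC P a b c = 0)
    (a b c : Fin 4) : CC P a b c = 0 := by
  have key : ∀ a b c : Fin 4, a < b → CC P a b c = 0 := by
    intro a b c hab
    rcases lt_trichotomy b c with hbc | rfl | hbc
    · exact h a b c hab hbc
    · rw [CC_cyc]
      have := CC_anti P b b a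
      linarith
    · rcases lt_trichotomy a c with hac | rfl | hac
      · rw [CC_cyc, CC_cyc, CC_anti, h a c b hac hbc, neg_zero]
      · rw [CC_cyc, CC_cyc]
        have := CC_anti P a a b
        linarith
      · rw [CC_cyc, CC_cyc, h c a b hac hab]
  rcases lt_trichotomy a b with hab | rfl | hab
  · exact key a b c hab
  · have := CC_anti P a a c
    linarith
  · rw [CC_anti, key b a c hab, neg_zero]

lemma Y_eq {P : Fin 4 → Fin 3 → ℝ} (h : ∀ a b c : Fin 4, CC P a b c = 0) (c a b : Fin 4) :
    YY P c a b = - ∑ k, P c k * sg P k a b := by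
  have := h a b c
  unfold CC at this
  linarith

def MM (P : Fin 4 → Fin 3 → ℝ) (i j : Fin 6) : ℝ :=
  GG P (r1 i) (r1 j) * GG P (r2 i) (r2 j) - GG P (r1 i) (r2 j) * GG P (r2 i) (r1 j)

lemma key2a (P : Fin 4 → Fin 3 → ℝ) (i j : Fin 6) :
    MM P i j + (if j = cp i then ss i * DD P else 0) =
      ∑ k, sg P k (r1 i) (r2 i) * sg P k (r1 j) (r2 j) +
      ∑ e, YY P e (r1 i) (r2 i) * YY P e (r1 j) (r2 j) := by
  fin_cases i <;> fin_cases j <;>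
  simp [MM, cp, ss, DD, sg, YY, GG, r1, r2, om, mn, Fin.sum_univ_three, Fin.sum_univ_four] <;> ring

lemma key2 {P : Fin 4 → Fin 3 → ℝ} (h : ∀ a b c : Fin 4, CC P a b c = 0) (i j : Fin 6) :
    MM P i j + (if j = cp i then ss i * DD P else 0) =
      ∑ k, ∑ l, hh P k l * sg P k (r1 i) (r2 i) * sg P l (r1 j) (r2 j) := by
  rw [key2a]
  simp only [Y_eq h]
  simp only [hh, Fin.sum_univ_three, Fin.sum_univ_four]
  simp
  ring

/-- `σ_k ∧ b` -/
def mw (P : Fin 4 → Fin 3 → ℝ) (b : Fin 6 → ℝ) (k : Fin 3) : ℝ :=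
  ∑ j, sg P k (r1 j) (r2 j) * (ss j * b (cp j))

lemma star_eq {P : Fin 4 → Fin 3 → ℝ} (h : ∀ a b c : Fin 4, CC P a b c = 0) (b : Fin 6 → ℝ)
    (i : Fin 6) :
    ∑ j, MM P i j * (ss j * b (cp j)) + DD P * b i =
      ∑ k, ∑ l, hh P k l * sg P k (r1 i) (r2 i) * mw P b l := by
  have : ∑ j, MM P i j * (ss j * b (cp j)) + DD P * b i =
    ∑ j, (MM P i j + (if j = cp i then ss i * DD P else 0)) * (ss j * b (cp j)) := by
    simp only [add_mul, Finset.sum_add_distrib, ite_mul, zero_mul, Finset.sum_ite_eq',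
      Finset.mem_univ, if_true]
    congr 1
    fin_cases i <;> simp [ss, cp]
  rw [this]
  simp only [key2 h, mw, Finset.mul_sum, Finset.sum_mul]
  rw [Finset.sum_comm]
  refine Finset.sum_congr rfl fun k _ => ?_
  rw [Finset.sum_comm]
  refine Finset.sum_congr rfl fun l _ => Finset.sum_congr rfl fun j _ => ?_
  ring

lemma asd_iff {P : Fin 4 → Fin 3 → ℝ} (h : ∀ a b c : Fin 4, CC P a b c = 0) (b : Fin 6 → ℝ) :
    (∀ i, ∑ j, MM P i j * (ss j * b (cp j)) = - (DD P * b i)) ↔ ∀ k, mw P b k = 0 := by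
  constructor
  · intro H
    have H0 : ∀ i, ∑ k, ∑ l, hh P k l * sg P k (r1 i) (r2 i) * mw P b l = 0 := by
      intro i
      rw [← star_eq h, H i]; ring
    have H1 : ∑ k, ∑ l, hh P k l * mw P b k * mw P b l = 0 := by
      have e : ∑ i, (∑ k, ∑ l, hh P k l * sg P k (r1 i) (r2 i) * mw P b l) * (ss i * b (cp i))
          = 0 := by simp [H0]
      rw [← e]
      symm
      simp only [Finset.sum_mul]
      rw [Finset.sum_comm]
      refine Finset.sum_congr rfl fun k _ => ?_
      rw [Finset.sum_comm]
      refine Finset.sum_congr rfl fun l _ => ?_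
      conv_rhs => rw [mw, Finset.mul_sum, Finset.sum_mul]
      refine Finset.sum_congr rfl fun j _ => ?_
      ring
    have H2 : ∑ k, mw P b k ^ 2 + ∑ a, (∑ k, P a k * mw P b k) ^ 2 = 0 := by
      rw [← H1]
      simp only [hh, Fin.sum_univ_three, Fin.sum_univ_four]
      simp
      ring
    have H3 : ∑ k, mw P b k ^ 2 = 0 := by
      have h1 : 0 ≤ ∑ k, mw P b k ^ 2 := Finset.sum_nonneg fun k _ => sq_nonneg _
      have h2 : 0 ≤ ∑ a, (∑ k, P a k * mw P b k) ^ 2 := Finset.sum_nonneg fun k _ => sq_nonneg _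
      linarith
    intro k
    have := (Finset.sum_eq_zero_iff_of_nonneg (s := Finset.univ) (f := fun k => mw P b k ^ 2) (fun k _ => sq_nonneg (mw P b k))).mp H3 k (Finset.mem_univ k)
    exact pow_eq_zero_iff (two_ne_zero) |>.mp this
  · intro H i
    have := star_eq h b i
    simp only [H, mul_zero, Finset.sum_const_zero] at this
    linarith

lemma exists_ker (P : Fin 4 → Fin 3 → ℝ) : ∃ b : Fin 6 → ℝ, b ≠ 0 ∧ ∀ k, mw P b k = 0 := by
  let L : (Fin 6 → ℝ) →ₗ[ℝ] (Fin 3 → ℝ) :=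
    { toFun := fun b => mw P b
      map_add' := by
        intro b b'; ext k
        simp only [mw, Pi.add_apply, ← Finset.sum_add_distrib]
        refine Finset.sum_congr rfl fun j _ => ?_
        ring
      map_smul' := by
        intro c b; ext k
        simp only [mw, Pi.smul_apply, smul_eq_mul, RingHom.id_apply, Finset.mul_sum]
        refine Finset.sum_congr rfl fun j _ => ?_
        ring }
  have hL : LinearMap.ker L ≠ ⊥ := by
    apply LinearMap.ker_ne_bot_of_finrank_lt
    simp
  obtain ⟨b, hb, hb0⟩ := (Submodule.ne_bot_iff _).mp hL
  exact ⟨b, hb0, fun k => congrFun (LinearMap.mem_ker.mp hb) k⟩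


/-- 2x2 minors of a 4x4 matrix. -/
def m2 (G : Matrix (Fin 4) (Fin 4) ℝ) (i j : Fin 6) : ℝ :=
  G (r1 i) (r1 j) * G (r2 i) (r2 j) - G (r1 i) (r2 j) * G (r2 i) (r1 j)

lemma det4 (G : Matrix (Fin 4) (Fin 4) ℝ) :
    G.det = ∑ j, ss j * m2 G 0 j * m2 G 5 (cp j) := by
  rw [Matrix.det_succ_row_zero]
  simp [Fin.sum_univ_succ, Matrix.det_fin_three, Matrix.submatrix, m2, ss, cp, r1, r2, Fin.succAbove]
  ring


lemma laplace (G : Matrix (Fin 4) (Fin 4) ℝ) (i k : Fin 6) :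
    ∑ j, m2 G i j * ss j * m2 G k (cp j) = if k = cp i then ss i * G.det else 0 := by
  rw [det4]
  fin_cases i <;> fin_cases k <;>
  simp [Fin.sum_univ_six, m2, ss, cp, r1, r2] <;> ring

lemma m2_mul (G H : Matrix (Fin 4) (Fin 4) ℝ) (i k : Fin 6) :
    m2 (G * H) i k = ∑ j, m2 G i j * m2 H j k := by
  simp [Fin.sum_univ_six, Fin.sum_univ_four, m2, r1, r2, Matrix.mul_apply]
  ring

lemma m2_one (i k : Fin 6) : m2 1 i k = if i = k then 1 else 0 := by
  fin_cases i <;> fin_cases k <;> simp [m2, Matrix.one_apply] <;> simp [r1, r2]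

lemma cp_cp (i : Fin 6) : cp (cp i) = i := by fin_cases i <;> rfl
lemma ss_cp (i : Fin 6) : ss (cp i) = ss i := by fin_cases i <;> rfl
lemma ss_ss (i : Fin 6) : ss i * ss i = 1 := by fin_cases i <;> simp [ss]

lemma m2_inv (G H : Matrix (Fin 4) (Fin 4) ℝ) (hGH : G * H = 1) (x y : Fin 6 → ℝ) :
    (∀ i, ∑ j, m2 H i j * x j = y i) → (∀ i, ∑ j, m2 G i j * y j = x i) := by
  intro h i
  simp only [← h, Finset.mul_sum]
  rw [Finset.sum_comm]
  calc _ = ∑ k, m2 (G * H) i k * x k := by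
        refine Finset.sum_congr rfl fun k _ => ?_
        rw [m2_mul, Finset.sum_mul]
        exact Finset.sum_congr rfl fun j _ => by ring
    _ = x i := by simp [hGH, m2_one]

lemma MM_eq (P : Fin 4 → Fin 3 → ℝ) (i j : Fin 6) : MM P i j = m2 (Matrix.of (GG P)) i j := rfl

lemma GG_symm (P : Fin 4 → Fin 3 → ℝ) (a b : Fin 4) : GG P a b = GG P b a := by
  simp [GG, eq_comm, mul_comm]

lemma MM_symm (P : Fin 4 → Fin 3 → ℝ) (i j : Fin 6) : MM P i j = MM P j i := by
  unfold MM
  rw [GG_symm P (r1 i), GG_symm P (r1 i), GG_symm P (r2 i), GG_symm P (r2 i)]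
  ring

lemma D_sq {P : Fin 4 → Fin 3 → ℝ} (h : ∀ a b c : Fin 4, CC P a b c = 0) :
    DD P ^ 2 = (Matrix.of (GG P)).det := by
  obtain ⟨b, hb, hk⟩ := exists_ker P
  have H := (asd_iff h b).mpr hk
  obtain ⟨k, hk0⟩ := Function.ne_iff.mp hb
  have e1 : ∑ i, MM P k i * (ss i * ∑ j, MM P (cp i) j * (ss j * b (cp j))) = DD P ^ 2 * b k := by
    simp only [H]
    have := H k
    calc _ = - DD P * ∑ i, MM P k i * (ss i * b (cp i)) := by
          rw [Finset.mul_sum]; exact Finset.sum_congr rfl fun j _ => by ring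
      _ = _ := by rw [this]; ring
  have e2 : ∑ i, MM P k i * (ss i * ∑ j, MM P (cp i) j * (ss j * b (cp j))) =
      (Matrix.of (GG P)).det * b k := by
    calc _ = ∑ j, (∑ i, MM P k i * ss i * MM P j (cp i)) * (ss j * b (cp j)) := by
          simp only [Finset.mul_sum, Finset.sum_mul]
          rw [Finset.sum_comm]
          refine Finset.sum_congr rfl fun j _ => Finset.sum_congr rfl fun i _ => ?_
          rw [MM_symm P (cp i) j]; ring
      _ = _ := by
          simp only [MM_eq, laplace]
          simp only [ite_mul, zero_mul, Finset.sum_ite_eq', Finset.mem_univ, if_true]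
          rw [cp_cp, ss_cp]
          linear_combination ((Matrix.of (GG P)).det * b k) * ss_ss k
  have := e1.symm.trans e2
  exact mul_right_cancel₀ hk0 this

lemma det_pos (P : Fin 4 → Fin 3 → ℝ) : 0 < (Matrix.of (GG P)).det := by
  have : (Matrix.of (GG P)) = 1 + (Matrix.of P) * (Matrix.of P).conjTranspose := by
    ext a b
    simp [GG, Matrix.mul_apply, Matrix.one_apply]
  rw [this]
  exact (Matrix.PosDef.one.add_posSemidef (Matrix.posSemidef_self_mul_conjTranspose _)).det_pos

lemma eps_sqrt {P : Fin 4 → Fin 3 → ℝ} (h : ∀ a b c : Fin 4, CC P a b c = 0) :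
    Real.sign (DD P) * Real.sqrt (Matrix.of (GG P)).det = DD P ∧ DD P ≠ 0 := by
  have h2 := det_pos P
  rw [← D_sq h] at h2 ⊢
  have h0 : DD P ≠ 0 := by
    intro h0; simp [h0] at h2
  refine ⟨?_, h0⟩
  rw [Real.sqrt_sq_eq_abs]
  rcases lt_or_gt_of_ne h0 with h0 | h0
  · rw [Real.sign_of_neg h0, abs_of_neg h0]; ring
  · rw [Real.sign_of_pos h0, abs_of_pos h0]; ring

lemma main_asd {P : Fin 4 → Fin 3 → ℝ} (h : ∀ a b c : Fin 4, CC P a b c = 0) (b : Fin 6 → ℝ) :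
    (∀ i, ss i * Real.sign (DD P) * Real.sqrt (Matrix.of (GG P)).det *
      (∑ j, m2 (Matrix.of (GG P))⁻¹ (cp i) j * b j) = - b i) ↔ ∀ k, mw P b k = 0 := by
  rw [← asd_iff h]
  obtain ⟨h1, h0⟩ := eps_sqrt h
  have hu : IsUnit (Matrix.of (GG P)).det := (det_pos P).ne'.isUnit
  have i1 := Matrix.mul_nonsing_inv _ hu
  have i2 := Matrix.nonsing_inv_mul _ hu
  simp only [mul_assoc _ (Real.sign (DD P)), h1]
  simp only [MM_eq]
  generalize Matrix.of (GG P) = G at *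
  generalize DD P = D at *
  constructor
  · intro H
    have v : ∀ i, ∑ j, m2 G⁻¹ i j * b j = - (ss i * b (cp i)) / D := by
      intro i
      have := H (cp i)
      rw [cp_cp, ss_cp] at this
      field_simp
      linear_combination ss i * this - (D * ∑ j, m2 G⁻¹ i j * b j) * ss_ss i
    intro i
    rw [← m2_inv G G⁻¹ i1 _ _ v i, ← mul_neg_one, mul_assoc, Finset.sum_mul, Finset.mul_sum]
    refine Finset.sum_congr rfl fun j _ => ?_
    field_simp
  · intro H i
    have v : ∀ i, ∑ j, m2 G i j * (- (ss j * b (cp j)) / D) = b i := by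
      intro i
      have := H i
      rw [eq_comm, ← mul_right_inj' (neg_ne_zero.mpr h0), neg_mul, ← this, Finset.mul_sum]
      refine Finset.sum_congr rfl fun j _ => ?_
      field_simp
    have := m2_inv G⁻¹ G i2 _ _ v (cp i)
    rw [this, cp_cp, ss_cp]
    field_simp
    linear_combination (- b i) * ss_ss i

end Alg

section Forms

lemma wedge_e1 (a b : Fin n) (u : Finset (Fin n)) :
    wedge (e1 a : Form ℝ n) (e1 b) u =
      if a ≠ b ∧ u = {a, b} then (if b < a then -1 else 1) else 0 := by
  have hg : isGrade 1 (e1 a : Form ℝ n) := by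
    intro s hs
    unfold e1
    rw [if_neg]
    rintro rfl
    simp at hs
  by_cases h : a ≠ b ∧ u = {a, b}
  · obtain ⟨hab, rfl⟩ := h
    rw [if_pos ⟨hab, rfl⟩]
    unfold wedge
    have e : ({a, b} : Finset (Fin n)) \ {a} = {b} := by
      ext x; simp; aesop
    rw [Finset.sum_eq_single {a}]
    · rw [e]
      simp only [e1, if_true, mul_one, signMerge, Finset.singleton_product_singleton]
      by_cases hba : b < a <;> simp [Finset.filter_singleton, hba]
    · intro s _ hs
      simp [e1, hs]
    · intro h; simp at h
  · rw [if_neg h]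
    unfold wedge
    apply Finset.sum_eq_zero
    intro s hs
    by_cases h1 : s = {a}
    · by_cases h2 : u \ s = {b}
      · exfalso
        apply h
        subst h1
        have hs' := Finset.mem_powerset.mp hs
        have hb : b ∈ u \ {a} := by rw [h2]; simp
        have hb' := (Finset.mem_sdiff.mp hb).2
        refine ⟨fun h => hb' (by simp [h]), ?_⟩
        rw [← Finset.sdiff_union_of_subset hs', h2, Finset.union_comm]; rfl
      · simp [e1, h2]
    · simp [e1, h1]

lemma wedge_e1_grade (a b : Fin n) : isGrade 2 (wedge (e1 a : Form ℝ n) (e1 b)) := by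
  intro s hs
  rw [wedge_e1, if_neg]
  rintro ⟨h, rfl⟩
  exact hs (Finset.card_pair h)

lemma signMerge_map {m : ℕ} (f : Fin m ↪o Fin n) (s t : Finset (Fin m)) :
    (signMerge (s.map f.toEmbedding) (t.map f.toEmbedding) : ℝ) = signMerge s t := by
  unfold signMerge
  congr 1
  apply Eq.symm
  apply Finset.card_bij (fun p _ => (f p.1, f p.2))
  · intro p hp
    simp at hp ⊢
    exact hp
  · intro p _ q _ h
    simp at h
    exact Prod.ext h.1 h.2
  · rintro ⟨x, y⟩ hp
    simp at hp
    obtain ⟨⟨⟨a, ha, rfl⟩, ⟨b, hb, rfl⟩⟩, h⟩ := hp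
    exact ⟨(a, b), by simpa [ha, hb] using h, rfl⟩

lemma wedge_map {m : ℕ} (f : Fin m ↪o Fin n) (α β : Form ℝ n) (u : Finset (Fin m)) :
    wedge α β (u.map f.toEmbedding) =
      wedge (fun s => α (s.map f.toEmbedding)) (fun s => β (s.map f.toEmbedding)) u := by
  unfold wedge
  symm
  apply Finset.sum_bij (fun s _ => s.map f.toEmbedding)
  · intro s hs
    simpa using hs
  · intro s _ t _ h
    exact Finset.map_injective _ h
  · intro s hs
    obtain ⟨t, ht, rfl⟩ := Finset.subset_map_iff.mp (Finset.mem_powerset.mp hs)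
    exact ⟨t, by simpa using ht, rfl⟩
  · intro s hs
    rw [← Finset.map_sdiff, signMerge_map]

lemma ins_mem {a : Fin n} {s t : Finset (Fin n)} (h : a ∈ s) : insert a t \ s = t \ s :=
  Finset.insert_sdiff_of_mem _ h
lemma ins_nmem {a : Fin n} {s t : Finset (Fin n)} (h : a ∉ s) :
    insert a t \ s = insert a (t \ s) := Finset.insert_sdiff_of_notMem _ h
lemma sing_mem {a : Fin n} {s : Finset (Fin n)} (h : a ∈ s) : {a} \ s = ∅ := by simpa
lemma sing_nmem {a : Fin n} {s : Finset (Fin n)} (h : a ∉ s) :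
    {a} \ s = {a} := by simpa
lemma ins_emp {a : Fin n} : insert a (∅ : Finset (Fin n)) = {a} := rfl

set_option maxRecDepth 10000 in
lemma w4' (γ δ : Form ℝ 4) (h : isGrade 2 γ) : wedge γ δ {0, 1, 2, 3} =
    γ {0, 1} * δ {2, 3} - γ {0, 2} * δ {1, 3} + γ {0, 3} * δ {1, 2} + γ {1, 2} * δ {0, 3}
      - γ {1, 3} * δ {0, 2} + γ {2, 3} * δ {0, 1} := by
  rw [wedge_gr h, show (Finset.powersetCard 2 ({0, 1, 2, 3} : Finset (Fin 4))) =
    {{0, 1}, {0, 2}, {0, 3}, {1, 2}, {1, 3}, {2, 3}} by decide]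
  repeat rw [Finset.sum_insert (by decide)]
  rw [Finset.sum_singleton]
  simp only [sm_eq]
  simp (decide := true) only [if_true, if_false, one_mul, neg_one_mul]
  simp (decide := true) [ins_mem, ins_nmem, sing_mem, sing_nmem]
  ring

set_option maxRecDepth 10000 in
lemma w6' (γ δ : Form ℝ 6) (h : isGrade 2 γ) : wedge γ δ {0, 1, 2, 3, 4, 5} =
    γ {0, 1} * δ {2, 3, 4, 5} - γ {0, 2} * δ {1, 3, 4, 5} + γ {0, 3} * δ {1, 2, 4, 5}
    - γ {0, 4} * δ {1, 2, 3, 5} + γ {0, 5} * δ {1, 2, 3, 4} + γ {1, 2} * δ {0, 3, 4, 5}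
    - γ {1, 3} * δ {0, 2, 4, 5} + γ {1, 4} * δ {0, 2, 3, 5} - γ {1, 5} * δ {0, 2, 3, 4}
    + γ {2, 3} * δ {0, 1, 4, 5} - γ {2, 4} * δ {0, 1, 3, 5} + γ {2, 5} * δ {0, 1, 3, 4}
    + γ {3, 4} * δ {0, 1, 2, 5} - γ {3, 5} * δ {0, 1, 2, 4} + γ {4, 5} * δ {0, 1, 2, 3} := by
  rw [wedge_gr h, show (Finset.powersetCard 2 ({0, 1, 2, 3, 4, 5} : Finset (Fin 6))) =
    {{0, 1}, {0, 2}, {0, 3}, {0, 4}, {0, 5}, {1, 2}, {1, 3}, {1, 4}, {1, 5},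
      {2, 3}, {2, 4}, {2, 5}, {3, 4}, {3, 5}, {4, 5}} by decide]
  repeat rw [Finset.sum_insert (by decide)]
  rw [Finset.sum_singleton]
  simp only [sm_eq]
  simp (decide := true) only [if_true, if_false, one_mul, neg_one_mul]
  simp (decide := true) [ins_mem, ins_nmem, sing_mem, sing_nmem]
  ring

lemma grade_map {m k : ℕ} (f : Fin m ↪o Fin n) {γ : Form ℝ n} (h : isGrade k γ) :
    isGrade k (fun s => γ (s.map f.toEmbedding)) := by
  intro s hs
  exact h _ (by rwa [Finset.card_map])

lemma w4 {γ δ : Form ℝ n} (h : isGrade 2 γ) {a b c d : Fin n} (hab : a < b) (hbc : b < c)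
    (hcd : c < d) : wedge γ δ {a, b, c, d} =
    γ {a, b} * δ {c, d} - γ {a, c} * δ {b, d} + γ {a, d} * δ {b, c} + γ {b, c} * δ {a, d}
      - γ {b, d} * δ {a, c} + γ {c, d} * δ {a, b} := by
  have hf : StrictMono ![a, b, c, d] := by
    rw [Fin.strictMono_iff_lt_succ]
    intro i
    fin_cases i <;> simpa
  have := wedge_map (OrderEmbedding.ofStrictMono _ hf) γ δ {0, 1, 2, 3}
  rw [w4' _ _ (grade_map _ h)] at this
  simpa [Finset.map_insert, Finset.map_singleton] using this

lemma w6 {γ δ : Form ℝ n} (h : isGrade 2 γ) {a b c d e f : Fin n} (hab : a < b) (hbc : b < c)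
    (hcd : c < d) (hde : d < e) (hef : e < f) : wedge γ δ {a, b, c, d, e, f} =
    γ {a, b} * δ {c, d, e, f} - γ {a, c} * δ {b, d, e, f} + γ {a, d} * δ {b, c, e, f}
    - γ {a, e} * δ {b, c, d, f} + γ {a, f} * δ {b, c, d, e} + γ {b, c} * δ {a, d, e, f}
    - γ {b, d} * δ {a, c, e, f} + γ {b, e} * δ {a, c, d, f} - γ {b, f} * δ {a, c, d, e}
    + γ {c, d} * δ {a, b, e, f} - γ {c, e} * δ {a, b, d, f} + γ {c, f} * δ {a, b, d, e}
    + γ {d, e} * δ {a, b, c, f} - γ {d, f} * δ {a, b, c, e} + γ {e, f} * δ {a, b, c, d} := by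
  have hf : StrictMono ![a, b, c, d, e, f] := by
    rw [Fin.strictMono_iff_lt_succ]
    intro i
    fin_cases i <;> simpa
  have := wedge_map (OrderEmbedding.ofStrictMono _ hf) γ δ {0, 1, 2, 3, 4, 5}
  rw [w6' _ _ (grade_map _ h)] at this
  simpa [Finset.map_insert, Finset.map_singleton] using this

end Forms

section Eval

lemma wedge_e1_pair {a b i j : Fin n} (hij : i < j) :
    wedge (e1 a : Form ℝ n) (e1 b) {i, j} =
      if a = i ∧ b = j then 1 else if a = j ∧ b = i then -1 else 0 := by
  rw [wedge_e1]
  have hne := hij.ne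
  by_cases h1 : a = i ∧ b = j
  · obtain ⟨rfl, rfl⟩ := h1
    simp [hne, hij.le]
  · by_cases h2 : a = j ∧ b = i
    · obtain ⟨rfl, rfl⟩ := h2
      rw [if_pos ⟨hne.symm, Finset.pair_comm _ _⟩, if_neg h1]
      simp [hij]
    · rw [if_neg h1, if_neg h2, if_neg]
      rintro ⟨_, h⟩
      have ha : a ∈ ({i, j} : Finset (Fin n)) := by rw [h]; simp
      have hb : b ∈ ({i, j} : Finset (Fin n)) := by rw [h]; simp
      simp only [Finset.mem_insert, Finset.mem_singleton] at ha hb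
      grind

/-- the real 2-form -/
def gam (P : Fin 4 → Fin 3 → ℝ) (Q : Fin 4 → Fin 4 → ℝ) : Form ℝ 7 :=
  (∑ a : Fin 4, ∑ b : Fin 4, Q a b • wedge (e1 (ya a)) (e1 (ya b))) +
  ∑ j : Fin 3, ∑ a : Fin 4, P a j • wedge (e1 (ya a)) (e1 (xj j))

def bet (Q : Fin 4 → Fin 4 → ℝ) : Form ℝ 4 :=
  ∑ a : Fin 4, ∑ b : Fin 4, Q a b • wedge (e1 a) (e1 b)

def bb (Q : Fin 4 → Fin 4 → ℝ) (i : Fin 6) : ℝ := Q (r1 i) (r2 i) - Q (r2 i) (r1 i)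

lemma gam_grade (P : Fin 4 → Fin 3 → ℝ) (Q : Fin 4 → Fin 4 → ℝ) : isGrade 2 (gam P Q) := by
  intro s hs
  simp only [gam, Pi.add_apply, Finset.sum_apply, Pi.smul_apply, wedge_e1_grade _ _ s hs]
  simp

lemma bet_grade (Q : Fin 4 → Fin 4 → ℝ) : isGrade 2 (bet Q) := by
  intro s hs
  simp only [bet, Finset.sum_apply, Pi.smul_apply, wedge_e1_grade _ _ s hs]
  simp

lemma bet_coef (Q : Fin 4 → Fin 4 → ℝ) (i : Fin 6) : bet Q {r1 i, r2 i} = bb Q i := by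
  have h : r1 i < r2 i := by fin_cases i <;> decide
  simp only [bet, Finset.sum_apply, Pi.smul_apply, wedge_e1_pair h]
  fin_cases i <;> simp (decide := true) [Fin.sum_univ_four, r1, r2, bb] <;> ring

def gm (P : Fin 4 → Fin 3 → ℝ) (b : Fin 6 → ℝ) : Fin 7 → Fin 7 → ℝ :=
  !![0, 0, 0, - P 0 0, - P 1 0, - P 2 0, - P 3 0;
     0, 0, 0, - P 0 1, - P 1 1, - P 2 1, - P 3 1;
     0, 0, 0, - P 0 2, - P 1 2, - P 2 2, - P 3 2;
     0, 0, 0, 0, b 0, b 1, b 2;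
     0, 0, 0, 0, 0, b 3, b 4;
     0, 0, 0, 0, 0, 0, b 5;
     0, 0, 0, 0, 0, 0, 0]

lemma ya_vals : ya 0 = 3 ∧ ya 1 = 4 ∧ ya 2 = 5 ∧ ya 3 = 6 := by decide
lemma xj_vals : xj 0 = 0 ∧ xj 1 = 1 ∧ xj 2 = 2 := by decide

lemma gam_coef (P : Fin 4 → Fin 3 → ℝ) (Q : Fin 4 → Fin 4 → ℝ) (i j : Fin 7) (h : i < j) :
    gam P Q {i, j} = gm P (bb Q) i j := by
  obtain ⟨y0, y1, y2, y3⟩ := ya_vals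
  obtain ⟨x0, x1, x2⟩ := xj_vals
  simp only [gam, Pi.add_apply, Finset.sum_apply, Pi.smul_apply, wedge_e1_pair h,
    Fin.sum_univ_four, Fin.sum_univ_three, y0, y1, y2, y3, x0, x1, x2]
  fin_cases i <;> fin_cases j <;> first
    | exact absurd h (by decide)
    | (simp (decide := true) [gm, bb, r1, r2]; try ring)

def RR (γ : Form ℝ 7) (u : Finset (Fin 7)) : ℝ :=
  -(1 / 6) * wedge γ (wedge γ γ) u + wedge γ psi7 u

variable {γ : Form ℝ 7} {P : Fin 4 → Fin 3 → ℝ} {b : Fin 6 → ℝ}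

lemma RR_x (h : isGrade 2 γ) (hc : ∀ i j, i < j → γ {i, j} = gm P b i j) :
    RR γ {1, 2, 3, 4, 5, 6} = mw P b 0 ∧ RR γ {0, 2, 3, 4, 5, 6} = - mw P b 1 ∧
    RR γ {0, 1, 3, 4, 5, 6} = mw P b 2 := by
  refine ⟨?_, ?_, ?_⟩
  all_goals
    unfold RR
    rw [w6 h (by decide) (by decide) (by decide) (by decide) (by decide),
      w6 h (by decide) (by decide) (by decide) (by decide) (by decide)]
    simp (decide := true) only [psi7, if_true, if_false]
    simp [w4 h, hc]
    simp [gm, mw, sg, om, mn, r1, r2, cp, ss, Fin.sum_univ_six]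
    ring

lemma RR_y (h : isGrade 2 γ) (hc : ∀ i j, i < j → γ {i, j} = gm P b i j) :
    RR γ {0, 1, 2, 4, 5, 6} = - CC P 1 2 3 ∧ RR γ {0, 1, 2, 3, 5, 6} = - CC P 0 2 3 ∧
    RR γ {0, 1, 2, 3, 4, 6} = - CC P 0 1 3 ∧ RR γ {0, 1, 2, 3, 4, 5} = - CC P 0 1 2 := by
  refine ⟨?_, ?_, ?_, ?_⟩
  all_goals
    unfold RR
    rw [w6 h (by decide) (by decide) (by decide) (by decide) (by decide),
      w6 h (by decide) (by decide) (by decide) (by decide) (by decide)]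
    simp (decide := true) only [psi7, if_true, if_false]
    simp [w4 h, hc]
    simp [gm, CC, YY, sg, om, mn, Fin.sum_univ_three]
    ring

end Eval

section Phi

def TT : Finset (Finset (Fin 7)) :=
  {{0, 1, 2}, {0, 3, 4}, {0, 5, 6}, {1, 3, 5}, {1, 4, 6}, {2, 3, 6}, {2, 4, 5}}

lemma phi_supp (s : Finset (Fin 7)) (h : s ∉ TT) : (phi7 s : ℝ) = 0 := by
  simp only [TT, Finset.mem_insert, Finset.mem_singleton, not_or] at h
  simp [phi7, h]

def UU : Finset (Finset (Fin 7)) :=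
  {{3, 4, 5, 6}, {1, 2, 5, 6}, {1, 2, 3, 4}, {0, 2, 4, 6}, {0, 2, 3, 5}, {0, 1, 4, 5},
    {0, 1, 3, 6}}

lemma psi_supp (s : Finset (Fin 7)) (h : s ∉ UU) : (psi7 s : ℝ) = 0 := by
  simp only [UU, Finset.mem_insert, Finset.mem_singleton, not_or] at h
  simp [psi7, h]

set_option maxRecDepth 10000 in
lemma phi_grade : isGrade 3 (phi7 : Form ℝ 7) := by
  intro s hs
  apply phi_supp
  intro h
  revert s
  decide

def trm (X : Form ℝ 7) (u s : Finset (Fin 7)) : ℝ :=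
  if s ⊆ u then signMerge s (u \ s) * (signMerge (u \ s)ᶜ (u \ s) * X (u \ s)ᶜ) else 0

lemma wedge_phi (X : Form ℝ 7) (u : Finset (Fin 7)) :
    wedge phi7 (hstar X) u = ∑ s ∈ TT, phi7 s * trm X u s := by
  rw [Finset.sum_subset (Finset.subset_univ TT)
    (fun s _ hs => by rw [phi_supp s hs, zero_mul])]
  unfold wedge
  rw [← Finset.sum_subset (Finset.subset_univ u.powerset)]
  · refine Finset.sum_congr rfl fun s hs => ?_
    rw [trm, if_pos (Finset.mem_powerset.mp hs)]
    simp only [hstar]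
    ring
  · intro s _ hs
    rw [trm, if_neg (fun h => hs (Finset.mem_powerset.mpr h)), mul_zero]

lemma trm_zero {X : Form ℝ 7} {u s : Finset (Fin 7)} (h : ¬ s ⊆ u) : trm X u s = 0 := by
  rw [trm, if_neg h]

lemma trm_pos {X : Form ℝ 7} {u s : Finset (Fin 7)} (T : Finset (Fin 7))
    (h : s ⊆ u ∧ (u \ s)ᶜ = T ∧ (sgZ s (u \ s) ↔ sgZ T (u \ s))) : trm X u s = X T := by
  obtain ⟨h1, h2, h3⟩ := h
  rw [trm, if_pos h1, h2, sm_eq, sm_eq]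
  by_cases h4 : sgZ T (u \ s)
  · rw [if_pos h4, if_pos (h3.mpr h4)]; ring
  · rw [if_neg h4, if_neg (fun h => h4 (h3.mp h))]; ring

lemma trm_neg {X : Form ℝ 7} {u s : Finset (Fin 7)} (T : Finset (Fin 7))
    (h : s ⊆ u ∧ (u \ s)ᶜ = T ∧ ¬ (sgZ s (u \ s) ↔ sgZ T (u \ s))) : trm X u s = - X T := by
  obtain ⟨h1, h2, h3⟩ := h
  rw [trm, if_pos h1, h2, sm_eq, sm_eq]
  by_cases h4 : sgZ T (u \ s)
  · have h5 : ¬ sgZ s (u \ s) := fun h => h3 ⟨fun _ => h4, fun _ => h⟩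
    rw [if_pos h4, if_neg h5]; ring
  · have h5 : sgZ s (u \ s) := by by_contra h; exact h3 ⟨fun h' => absurd h' h, fun h' => absurd h' h4⟩
    rw [if_neg h4, if_pos h5]; ring

set_option maxRecDepth 10000 in
lemma sum_TT (F : Finset (Fin 7) → ℝ) : ∑ s ∈ TT, phi7 s * F s =
    F {0, 1, 2} + F {0, 3, 4} + F {0, 5, 6} + F {1, 3, 5} - F {1, 4, 6} - F {2, 3, 6}
      - F {2, 4, 5} := by
  unfold TT
  repeat rw [Finset.sum_insert (by decide)]
  rw [Finset.sum_singleton]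
  simp (decide := true) only [phi7, if_true, if_false]
  ring

set_option maxRecDepth 10000 in
lemma sum_UU (F : Finset (Fin 7) → ℝ) : ∑ s ∈ UU, psi7 s * F s =
    F {3, 4, 5, 6} + F {1, 2, 5, 6} + F {1, 2, 3, 4} + F {0, 2, 4, 6} - F {0, 2, 3, 5}
      - F {0, 1, 4, 5} - F {0, 1, 3, 6} := by
  unfold UU
  repeat rw [Finset.sum_insert (by decide)]
  rw [Finset.sum_singleton]
  simp (decide := true) only [psi7, if_true, if_false]
  ring

set_option maxRecDepth 10000 in
lemma phi_star (X : Form ℝ 7) :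
    wedge phi7 (hstar X) {1, 2, 3, 4, 5, 6} =
      X {0, 1, 3, 5} - X {0, 1, 4, 6} - X {0, 2, 3, 6} - X {0, 2, 4, 5} ∧
    wedge phi7 (hstar X) {0, 2, 3, 4, 5, 6} =
      X {0, 1, 3, 4} + X {0, 1, 5, 6} + X {1, 2, 3, 6} + X {1, 2, 4, 5} ∧
    wedge phi7 (hstar X) {0, 1, 3, 4, 5, 6} =
      -X {0, 2, 3, 4} - X {0, 2, 5, 6} - X {1, 2, 3, 5} + X {1, 2, 4, 6} ∧
    wedge phi7 (hstar X) {0, 1, 2, 4, 5, 6} =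
      X {0, 1, 2, 3} + X {0, 3, 5, 6} - X {1, 3, 4, 6} - X {2, 3, 4, 5} ∧
    wedge phi7 (hstar X) {0, 1, 2, 3, 5, 6} =
      -X {0, 1, 2, 4} - X {0, 4, 5, 6} + X {1, 3, 4, 5} - X {2, 3, 4, 6} ∧
    wedge phi7 (hstar X) {0, 1, 2, 3, 4, 6} =
      X {0, 1, 2, 5} + X {0, 3, 4, 5} + X {1, 4, 5, 6} + X {2, 3, 5, 6} ∧
    wedge phi7 (hstar X) {0, 1, 2, 3, 4, 5} =
      -X {0, 1, 2, 6} - X {0, 3, 4, 6} - X {1, 3, 5, 6} + X {2, 4, 5, 6} := by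
  simp only [wedge_phi, sum_TT]
  refine ⟨?_, ?_, ?_, ?_, ?_, ?_, ?_⟩
  · rw [trm_zero (by decide), trm_zero (by decide),
      trm_zero (by decide), trm_pos {0, 1, 3, 5} (by decide),
      trm_pos {0, 1, 4, 6} (by decide), trm_pos {0, 2, 3, 6} (by decide),
      trm_pos {0, 2, 4, 5} (by decide)]
    ring
  · rw [trm_zero (by decide), trm_pos {0, 1, 3, 4} (by decide),
      trm_pos {0, 1, 5, 6} (by decide), trm_zero (by decide),
      trm_zero (by decide), trm_neg {1, 2, 3, 6} (by decide),
      trm_neg {1, 2, 4, 5} (by decide)]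
    ring
  · rw [trm_zero (by decide), trm_neg {0, 2, 3, 4} (by decide),
      trm_neg {0, 2, 5, 6} (by decide), trm_neg {1, 2, 3, 5} (by decide),
      trm_neg {1, 2, 4, 6} (by decide), trm_zero (by decide),
      trm_zero (by decide)]
    ring
  · rw [trm_pos {0, 1, 2, 3} (by decide), trm_zero (by decide),
      trm_pos {0, 3, 5, 6} (by decide), trm_zero (by decide),
      trm_pos {1, 3, 4, 6} (by decide), trm_zero (by decide),
      trm_pos {2, 3, 4, 5} (by decide)]
    ring
  · rw [trm_neg {0, 1, 2, 4} (by decide), trm_zero (by decide),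
      trm_neg {0, 4, 5, 6} (by decide), trm_pos {1, 3, 4, 5} (by decide),
      trm_zero (by decide), trm_pos {2, 3, 4, 6} (by decide),
      trm_zero (by decide)]
    ring
  · rw [trm_pos {0, 1, 2, 5} (by decide), trm_pos {0, 3, 4, 5} (by decide),
      trm_zero (by decide), trm_zero (by decide),
      trm_neg {1, 4, 5, 6} (by decide), trm_neg {2, 3, 5, 6} (by decide),
      trm_zero (by decide)]
    ring
  · rw [trm_neg {0, 1, 2, 6} (by decide), trm_neg {0, 3, 4, 6} (by decide),
      trm_zero (by decide), trm_neg {1, 3, 5, 6} (by decide),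
      trm_zero (by decide), trm_zero (by decide),
      trm_neg {2, 4, 5, 6} (by decide)]
    ring

variable {γ : Form ℝ 7} {P : Fin 4 → Fin 3 → ℝ} {b : Fin 6 → ℝ}

def cq (P : Fin 4 → Fin 3 → ℝ) (i : Fin 3) : ℝ :=
  P 0 i * CC P 1 2 3 - P 1 i * CC P 0 2 3 + P 2 i * CC P 0 1 3 - P 3 i * CC P 0 1 2

def tq (P : Fin 4 → Fin 3 → ℝ) (b : Fin 6 → ℝ) (a : Fin 4) : ℝ :=
  ∑ j, YY P a (r1 j) (r2 j) * (ss j * b (cp j))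

lemma ZZ_x (h : isGrade 2 γ) (hc : ∀ i j, i < j → γ {i, j} = gm P b i j) :
    wedge phi7 (hstar (wedge γ γ)) {1, 2, 3, 4, 5, 6} = -(2 * cq P 0) ∧
    wedge phi7 (hstar (wedge γ γ)) {0, 2, 3, 4, 5, 6} = 2 * cq P 1 ∧
    wedge phi7 (hstar (wedge γ γ)) {0, 1, 3, 4, 5, 6} = -(2 * cq P 2) := by
  obtain ⟨e0, e1, e2, -⟩ := phi_star (wedge γ γ)
  rw [e0, e1, e2]
  refine ⟨?_, ?_, ?_⟩
  all_goals
    simp [w4 h, hc]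
    simp [gm, cq, CC, YY, sg, om, mn, Fin.sum_univ_three]
    ring

lemma ZZ_y (h : isGrade 2 γ) (hc : ∀ i j, i < j → γ {i, j} = gm P b i j) :
    wedge phi7 (hstar (wedge γ γ)) {0, 1, 2, 4, 5, 6} = 2 * tq P b 0 ∧
    wedge phi7 (hstar (wedge γ γ)) {0, 1, 2, 3, 5, 6} = -(2 * tq P b 1) ∧
    wedge phi7 (hstar (wedge γ γ)) {0, 1, 2, 3, 4, 6} = 2 * tq P b 2 ∧
    wedge phi7 (hstar (wedge γ γ)) {0, 1, 2, 3, 4, 5} = -(2 * tq P b 3) := by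
  obtain ⟨-, -, -, e0, e1, e2, e3⟩ := phi_star (wedge γ γ)
  rw [e0, e1, e2, e3]
  refine ⟨?_, ?_, ?_, ?_⟩
  all_goals
    simp [w4 h, hc]
    simp [gm, tq, YY, om, r1, r2, cp, ss, Fin.sum_univ_three, Fin.sum_univ_six]
    ring

end Phi

section Fin1

lemma tq_zero {P : Fin 4 → Fin 3 → ℝ} (h : ∀ a b c : Fin 4, CC P a b c = 0) {b : Fin 6 → ℝ}
    (hm : ∀ k, mw P b k = 0) (a : Fin 4) : tq P b a = 0 := by
  have : tq P b a = -∑ k, P a k * mw P b k := by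
    simp only [tq, Y_eq h, mw, Finset.mul_sum, Finset.sum_mul, neg_mul, Finset.sum_neg_distrib]
    rw [Finset.sum_comm]
    simp only [mul_assoc]
  rw [this]
  simp [hm]

def dl (a b : Fin 4) : ℝ := if a = b then 1 else 0

lemma wC_x (f : (Fin 4 → ℝ) → (Fin 3 → ℝ)) (y : Fin 4 → ℝ) (a : Fin 4) :
    wC f y a = ![pd f y a 0, pd f y a 1, pd f y a 2, dl a 0,
      dl a 1, dl a 2, dl a 3] := by
  obtain ⟨y0, y1, y2, y3⟩ := ya_vals
  obtain ⟨x0, x1, x2⟩ := xj_vals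
  ext i
  simp only [wC, Fin.sum_univ_three, x0, x1, x2, Pi.add_apply, Pi.smul_apply, Pi.single_apply]
  fin_cases a <;> fin_cases i <;> simp (decide := true) [y0, y1, y2, y3, dl]

lemma gram_eq (f : (Fin 4 → ℝ) → (Fin 3 → ℝ)) (y : Fin 4 → ℝ) :
    gramC f y = Matrix.of (GG (pd f y)) := by
  ext a b
  simp only [gramC, Matrix.of_apply, GG, wC_x, Fin.sum_univ_seven, Fin.sum_univ_three]
  fin_cases a <;> fin_cases b <;> simp (decide := true) [dl] <;> ring

lemma oi {k : ℕ} {s : Finset (Fin n)} (h : s.card = k) (g : Fin k → Fin n)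
    (hg : ∀ x, g x ∈ s) (hm : StrictMono g) (j : Fin k) : (s.orderIsoOfFin h j : Fin n) = g j := by
  rw [Finset.coe_orderIsoOfFin_apply, ← Finset.orderEmbOfFin_unique h hg hm]

def tv {k : ℕ} (v : Fin k → (Fin n → ℝ)) (s : Finset (Fin n)) : ℝ :=
  if h : s.card = k then
      Matrix.det (Matrix.of fun i j => v i ((s.orderIsoOfFin h j : Fin n))) else 0

lemma tv_eq {k : ℕ} (v : Fin k → (Fin n → ℝ)) {s : Finset (Fin n)} (g : Fin k → Fin n)
    (h : s.card = k ∧ (∀ x, g x ∈ s) ∧ ∀ i j, i < j → g i < g j) :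
    tv v s = Matrix.det (Matrix.of fun i j => v i (g j)) := by
  obtain ⟨h1, h2, h3⟩ := h
  rw [tv, dif_pos h1]
  simp only [oi h1 g h2 (fun i j => h3 i j)]

lemma eval_phi (f : (Fin 4 → ℝ) → (Fin 3 → ℝ)) (y : Fin 4 → ℝ) (a b c : Fin 4) :
    evalForm phi7 ![wC f y a, wC f y b, wC f y c] = CC (pd f y) a b c := by
  have : evalForm phi7 ![wC f y a, wC f y b, wC f y c] =
      ∑ s ∈ TT, phi7 s * tv ![wC f y a, wC f y b, wC f y c] s := by
    rw [Finset.sum_subset (Finset.subset_univ TT)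
      (fun s _ hs => by rw [phi_supp s hs, zero_mul])]
    rfl
  rw [this, sum_TT, tv_eq _ ![0, 1, 2] (by decide), tv_eq _ ![0, 3, 4] (by decide),
    tv_eq _ ![0, 5, 6] (by decide), tv_eq _ ![1, 3, 5] (by decide), tv_eq _ ![1, 4, 6] (by decide),
    tv_eq _ ![2, 3, 6] (by decide), tv_eq _ ![2, 4, 5] (by decide)]
  have ho : ∀ a b : Fin 4, om 0 a b = dl a 0 * dl b 1
       - dl a 1 * dl b 0
       + dl a 2 * dl b 3
       - dl a 3 * dl b 2 ∧
      om 1 a b = dl a 0 * dl b 2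
       - dl a 2 * dl b 0
       - dl a 1 * dl b 3
       + dl a 3 * dl b 1 ∧
      om 2 a b = - dl a 0 * dl b 3
       + dl a 3 * dl b 0
       - dl a 1 * dl b 2
       + dl a 2 * dl b 1 := by
    intro a b
    fin_cases a <;> fin_cases b <;> simp (decide := true) [om, dl]
  simp only [CC, YY, sg, Fin.sum_univ_three, (ho _ _).1, (ho _ _).2.1, (ho _ _).2.2]
  simp only [Matrix.det_fin_three, Matrix.of_apply, wC_x]
  simp [mn]
  ring

lemma eval_psi (f : (Fin 4 → ℝ) → (Fin 3 → ℝ)) (y : Fin 4 → ℝ) :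
    evalForm psi7 (fun a => wC f y a) = DD (pd f y) := by
  have : evalForm psi7 (fun a => wC f y a) =
      ∑ s ∈ UU, psi7 s * tv (fun a => wC f y a) s := by
    rw [Finset.sum_subset (Finset.subset_univ UU)
      (fun s _ hs => by rw [psi_supp s hs, zero_mul])]
    rfl
  rw [this, sum_UU, tv_eq _ ![3, 4, 5, 6] (by decide), tv_eq _ ![1, 2, 5, 6] (by decide),
    tv_eq _ ![1, 2, 3, 4] (by decide), tv_eq _ ![0, 2, 4, 6] (by decide),
    tv_eq _ ![0, 2, 3, 5] (by decide), tv_eq _ ![0, 1, 4, 5] (by decide),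
    tv_eq _ ![0, 1, 3, 6] (by decide)]
  simp only [det4, Fin.sum_univ_six, m2, Matrix.of_apply, wC_x]
  simp (decide := true) [DD, mn, dl, ss, cp, r1, r2]
  ring

end Fin1

section Star

lemma min_eq (H : Matrix (Fin 4) (Fin 4) ℝ) (i j : Fin 6) :
    minor2 H {r1 i, r2 i} {r1 j, r2 j} = m2 H i j := by
  have hc : ∀ i, ({r1 i, r2 i} : Finset (Fin 4)).card = 2 := by decide
  have hm : ∀ i, ∀ x, ![r1 i, r2 i] x ∈ ({r1 i, r2 i} : Finset (Fin 4)) := by decide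
  have hs : ∀ i, ∀ x y, x < y → ![r1 i, r2 i] x < ![r1 i, r2 i] y := by decide
  have e : ∀ i x, ((({r1 i, r2 i} : Finset (Fin 4)).orderIsoOfFin (hc i) x : Fin 4)) =
      ![r1 i, r2 i] x := by
    intro i x
    rw [Finset.coe_orderIsoOfFin_apply,
      ← Finset.orderEmbOfFin_unique (hc i) (hm i) (fun x y => hs i x y)]
  rw [minor2, dif_pos (hc i), dif_pos (hc j)]
  simp only [e, Matrix.det_fin_two, Matrix.of_apply, m2]
  simp

set_option maxRecDepth 10000 in
lemma sum_two (F : Finset (Fin 4) → ℝ) (h : ∀ s, s.card ≠ 2 → F s = 0) :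
    ∑ s, F s = ∑ j, F {r1 j, r2 j} := by
  have : ∑ s, F s = ∑ s ∈ Finset.univ.image (fun j => ({r1 j, r2 j} : Finset (Fin 4))), F s := by
    symm
    apply Finset.sum_subset (Finset.subset_univ _)
    intro s _ hs
    apply h
    revert s
    decide
  rw [this, Finset.sum_image]
  intro a _ b _
  revert a b
  decide

set_option maxRecDepth 10000 in
lemma two_ex : ∀ t : Finset (Fin 4), t.card = 2 → ∃ i, t = {r1 i, r2 i} := by decide

lemma star_iff (G : Matrix (Fin 4) (Fin 4) ℝ) (ε : ℝ) (β : Form ℝ 4) (b : Fin 6 → ℝ)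
    (hg : isGrade 2 β) (hb : ∀ i, β {r1 i, r2 i} = b i) :
    starG G ε β = - β ↔ ∀ i, ss i * ε * Real.sqrt G.det *
      (∑ j, m2 G⁻¹ (cp i) j * b j) = - b i := by
  have hcompl : ∀ i, ({r1 i, r2 i} : Finset (Fin 4))ᶜ = {r1 (cp i), r2 (cp i)} := by decide
  have hsg : ∀ i, (signMerge ({r1 i, r2 i} : Finset (Fin 4))ᶜ {r1 i, r2 i} : ℝ) = ss i := by
    intro i
    rw [sm_eq]
    fin_cases i <;> simp (decide := true) only [ss] <;> simp
  have hin : ∀ u, innerG2 G⁻¹ (indF u) β = ∑ t, β t * minor2 G⁻¹ u t := by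
    intro u
    rw [innerG2, Finset.sum_eq_single u]
    · simp [indF]
    · intro s _ hs
      simp [indF, hs]
    · simp
  have key : ∀ i, starG G ε β {r1 i, r2 i} = ss i * ε * Real.sqrt G.det *
      (∑ j, m2 G⁻¹ (cp i) j * b j) := by
    intro i
    rw [starG, hsg, hcompl, hin, sum_two]
    · simp only [min_eq, hb, mul_comm]
    · intro s hs
      rw [hg s hs, zero_mul]
  constructor
  · intro h i
    rw [← key, h, Pi.neg_apply, hb]
  · intro h
    funext t
    by_cases ht : t.card = 2
    · obtain ⟨i, rfl⟩ := two_ex t ht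
      rw [key, h, Pi.neg_apply, hb]
    · have : tᶜ.card ≠ 2 := by
        rw [Finset.card_compl, Fintype.card_fin]; omega
      rw [starG, hin, Pi.neg_apply, hg t ht]
      simp [minor2, this]

end Star

section Cx

def cf (c : ℂ) (a : Form ℝ n) : Form ℂ n := fun s => c * ((a s : ℝ) : ℂ)

lemma sm_cast (s t : Finset (Fin n)) : (signMerge s t : ℂ) = ((signMerge s t : ℝ) : ℂ) := by
  simp [signMerge]

lemma wedge_cf (c d : ℂ) (a b : Form ℝ n) :
    wedge (cf c a) (cf d b) = cf (c * d) (wedge a b) := by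
  funext u
  simp only [wedge, cf, Complex.ofReal_sum, Complex.ofReal_mul, Finset.mul_sum, sm_cast]
  refine Finset.sum_congr rfl fun s _ => ?_
  ring

lemma hstar_cf (c : ℂ) (a : Form ℝ n) : hstar (cf c a) = cf c (hstar a) := by
  funext u
  simp only [hstar, cf, Complex.ofReal_mul, sm_cast]
  ring

lemma phi_cf : (phi7 : Form ℂ 7) = cf 1 phi7 := by
  funext s
  simp only [phi7, cf, one_mul, apply_ite Complex.ofReal, Complex.ofReal_one, Complex.ofReal_zero,
    Complex.ofReal_neg]

lemma psi_cf : (psi7 : Form ℂ 7) = cf 1 psi7 := by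
  funext s
  simp only [psi7, cf, one_mul, apply_ite Complex.ofReal, Complex.ofReal_one, Complex.ofReal_zero,
    Complex.ofReal_neg]

lemma FF_cf (f : (Fin 4 → ℝ) → (Fin 3 → ℝ)) (A : (Fin 4 → ℝ) → (Fin 4 → ℝ)) (y : Fin 4 → ℝ) :
    FBC A y + FSC f y = cf Complex.I (gam (pd f y) (pd A y)) := by
  funext s
  have : gam (pd f y) (pd A y) s = gammaBC A y s + gammaC f y s := rfl
  simp only [cf, this, FBC, FSC, Pi.add_apply, Complex.ofReal_add]
  ring

lemma eq1 (γ : Form ℝ 7) :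
    (6 : ℂ)⁻¹ • wedge (cf Complex.I γ) (wedge (cf Complex.I γ) (cf Complex.I γ)) +
      wedge (cf Complex.I γ) psi7 = 0 ↔ ∀ u, RR γ u = 0 := by
  rw [psi_cf, wedge_cf, wedge_cf, wedge_cf, funext_iff]
  refine forall_congr' fun u => ?_
  have : ((6 : ℂ)⁻¹ • cf (Complex.I * (Complex.I * Complex.I)) (wedge γ (wedge γ γ)) +
      cf (Complex.I * 1) (wedge γ psi7)) u = Complex.I * ((RR γ u : ℝ) : ℂ) := by
    simp only [Pi.add_apply, Pi.smul_apply, cf, RR, Complex.I_mul_I, smul_eq_mul]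
    push_cast
    ring
  rw [this]
  simp

lemma eq2 (γ : Form ℝ 7) :
    wedge phi7 (hstar (wedge (cf Complex.I γ) (cf Complex.I γ))) = 0 ↔
      ∀ u, wedge phi7 (hstar (wedge γ γ)) u = 0 := by
  rw [phi_cf, wedge_cf, hstar_cf, wedge_cf, funext_iff]
  refine forall_congr' fun u => ?_
  simp [cf]

end Cx

section Last

set_option maxRecDepth 10000 in
lemma six_cases : ∀ u : Finset (Fin 7), u.card = 6 →
    u = {1, 2, 3, 4, 5, 6} ∨ u = {0, 2, 3, 4, 5, 6} ∨ u = {0, 1, 3, 4, 5, 6} ∨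
    u = {0, 1, 2, 4, 5, 6} ∨ u = {0, 1, 2, 3, 5, 6} ∨ u = {0, 1, 2, 3, 4, 6} ∨
    u = {0, 1, 2, 3, 4, 5} := by decide

set_option maxRecDepth 10000 in
lemma psi_grade : isGrade 4 (psi7 : Form ℝ 7) := by
  intro s hs
  apply psi_supp
  intro h
  revert s
  decide

lemma hstar_grade {k l : ℕ} {α : Form ℝ n} (h : isGrade k α) (hkl : k + l = n) :
    isGrade l (hstar α) := by
  intro s hs
  rw [hstar, h, mul_zero]
  have := Finset.card_le_univ s
  rw [Fintype.card_fin] at this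
  rw [Finset.card_compl, Fintype.card_fin]
  omega

variable {γ : Form ℝ 7} {P : Fin 4 → Fin 3 → ℝ} {b : Fin 6 → ℝ}

lemma RR_iff (h : isGrade 2 γ) (hc : ∀ i j, i < j → γ {i, j} = gm P b i j) :
    (∀ u, RR γ u = 0) ↔ (∀ i j k, CC P i j k = 0) ∧ ∀ k, mw P b k = 0 := by
  obtain ⟨x0, x1, x2⟩ := RR_x h hc
  obtain ⟨y0, y1, y2, y3⟩ := RR_y h hc
  constructor
  · intro H
    rw [H] at x0 x1 x2 y0 y1 y2 y3
    refine ⟨CC_zero ?_, ?_⟩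
    · intro i j k hij hjk
      fin_cases i <;> fin_cases j <;> first
        | exact absurd hij (by decide)
        | (fin_cases k <;> first
            | exact absurd hjk (by decide)
            | (simp only [Fin.reduceFinMk, Fin.zero_eta, Fin.mk_one, Fin.isValue]; linarith))
    · intro k
      fin_cases k <;> simp only [Fin.reduceFinMk, Fin.zero_eta, Fin.mk_one, Fin.isValue] <;> linarith
  · rintro ⟨hC, hm⟩ u
    by_cases hu : u.card = 6
    · simp only [hC, hm, neg_zero] at x0 x1 x2 y0 y1 y2 y3
      rcases six_cases u hu with rfl | rfl | rfl | rfl | rfl | rfl | rfl <;> assumption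
    · rw [RR, wedge_isGrade h (wedge_isGrade h h) u (by omega),
        wedge_isGrade h psi_grade u (by omega)]
      ring

lemma ZZ_zero (h : isGrade 2 γ) (hc : ∀ i j, i < j → γ {i, j} = gm P b i j)
    (hC : ∀ i j k, CC P i j k = 0) (hm : ∀ k, mw P b k = 0) (u : Finset (Fin 7)) :
    wedge phi7 (hstar (wedge γ γ)) u = 0 := by
  by_cases hu : u.card = 6
  · obtain ⟨x0, x1, x2⟩ := ZZ_x h hc
    obtain ⟨y0, y1, y2, y3⟩ := ZZ_y h hc
    have hq : ∀ i, cq P i = 0 := by intro i; simp [cq, hC]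
    simp only [hq, tq_zero hC hm, mul_zero, neg_zero] at x0 x1 x2 y0 y1 y2 y3
    rcases six_cases u hu with rfl | rfl | rfl | rfl | rfl | rfl | rfl <;> assumption
  · exact wedge_isGrade phi_grade (hstar_grade (l := 3) (wedge_isGrade h h) rfl) u (by omega)

lemma point (f : (Fin 4 → ℝ) → (Fin 3 → ℝ)) (A : (Fin 4 → ℝ) → (Fin 4 → ℝ)) (y : Fin 4 → ℝ) :
    ((∀ a b c : Fin 4, a < b → b < c → evalForm phi7 ![wC f y a, wC f y b, wC f y c] = 0) ∧
      starG (gramC f y) (epsC f y) (betaC A y) = - betaC A y) ↔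
    (∀ i j k, CC (pd f y) i j k = 0) ∧ ∀ k, mw (pd f y) (bb (pd A y)) k = 0 := by
  have e : betaC A y = bet (pd A y) := rfl
  rw [e, star_iff _ _ _ _ (bet_grade _) (bet_coef _), epsC, eval_psi, gram_eq]
  simp only [eval_phi]
  constructor
  · rintro ⟨h1, h2⟩
    have h3 := CC_zero h1
    exact ⟨h3, (main_asd h3 _).mp h2⟩
  · rintro ⟨h1, h2⟩
    exact ⟨fun a b c _ _ => h1 a b c, (main_asd h1 _).mpr h2⟩

end Last

/-- Proposition 6.2.  The following are equivalent:
(1) the graph `S` is coassociative with an appropriate orientation and `β = -√-1 F_∇^B`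
is anti-self-dual with respect to the induced metric and the orientation making `S`
coassociative;
(2) `F_∇³/6 + F_∇ ∧ *₇φ = 0` on `B`;
(3) `F_∇³/6 + F_∇ ∧ *₇φ = 0` and `φ ∧ *₇(F_∇²) = 0` on `B`,
where `F_∇ = F_∇^B + F_∇^S`. -/
theorem statement14 (B : Set (Fin 4 → ℝ)) (hB : IsOpen B)
    (f : (Fin 4 → ℝ) → (Fin 3 → ℝ)) (hf : ContDiffOn ℝ (⊤ : ℕ∞) f B)
    (A : (Fin 4 → ℝ) → (Fin 4 → ℝ)) (hA : ContDiffOn ℝ (⊤ : ℕ∞) A B) :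
    (((∀ y ∈ B, ∀ a b c : Fin 4, a < b → b < c →
        evalForm phi7 ![wC f y a, wC f y b, wC f y c] = 0) ∧
      (∀ y ∈ B, starG (gramC f y) (epsC f y) (betaC A y) = - betaC A y)) ↔
      (∀ y ∈ B,
        (6 : ℂ)⁻¹ • wedge (FBC A y + FSC f y)
            (wedge (FBC A y + FSC f y) (FBC A y + FSC f y)) +
          wedge (FBC A y + FSC f y) psi7 = 0)) ∧
    (((∀ y ∈ B, ∀ a b c : Fin 4, a < b → b < c →
        evalForm phi7 ![wC f y a, wC f y b, wC f y c] = 0) ∧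
      (∀ y ∈ B, starG (gramC f y) (epsC f y) (betaC A y) = - betaC A y)) ↔
      (∀ y ∈ B,
        ((6 : ℂ)⁻¹ • wedge (FBC A y + FSC f y)
            (wedge (FBC A y + FSC f y) (FBC A y + FSC f y)) +
          wedge (FBC A y + FSC f y) psi7 = 0) ∧
        wedge phi7 (hstar (wedge (FBC A y + FSC f y) (FBC A y + FSC f y))) = 0)) := by

  have h2 : ∀ y, (6 : ℂ)⁻¹ • wedge (FBC A y + FSC f y)
            (wedge (FBC A y + FSC f y) (FBC A y + FSC f y)) +
          wedge (FBC A y + FSC f y) psi7 = 0 ↔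
      ((∀ a b c : Fin 4, a < b → b < c → evalForm phi7 ![wC f y a, wC f y b, wC f y c] = 0) ∧
      starG (gramC f y) (epsC f y) (betaC A y) = - betaC A y) := by
    intro y
    rw [point, FF_cf, eq1]
    exact RR_iff (gam_grade _ _) (gam_coef _ _)
  have h3 : ∀ y, (6 : ℂ)⁻¹ • wedge (FBC A y + FSC f y)
            (wedge (FBC A y + FSC f y) (FBC A y + FSC f y)) +
          wedge (FBC A y + FSC f y) psi7 = 0 →
      wedge phi7 (hstar (wedge (FBC A y + FSC f y) (FBC A y + FSC f y))) = 0 := by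
    intro y h
    rw [h2, point] at h
    rw [FF_cf, eq2]
    exact ZZ_zero (gam_grade _ _) (gam_coef _ _) h.1 h.2
  refine ⟨⟨fun h y hy => (h2 y).mpr ⟨h.1 y hy, h.2 y hy⟩,
      fun h => ⟨fun y hy => ((h2 y).mp (h y hy)).1, fun y hy => ((h2 y).mp (h y hy)).2⟩⟩,
    ⟨fun h y hy => ?_,
      fun h => ⟨fun y hy => ((h2 y).mp (h y hy).1).1, fun y hy => ((h2 y).mp (h y hy).1).2⟩⟩⟩
  have := (h2 y).mpr ⟨h.1 y hy, h.2 y hy⟩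
  exact ⟨this, h3 y this⟩

end FMpaper
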